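/- In every dimension N ≥ 1, the pull-in voltage of (P)_λ on the unit ball satisfies the strict lower bound λ* > λ̄_N = (8/9)(N−2/3)(N−8/3). -/

import Mathlib

open MeasureTheory Metric Set Filter

/-- The Laplacian of `u : ℝ^N → ℝ`, as the sum of pure second partial derivatives. -/
noncomputable def lap {N : ℕ} (u : EuclideanSpace ℝ (Fin N) → ℝ) (x : EuclideanSpace ℝ (Fin N)) : ℝ :=
  ∑ i : Fin N, fderiv ℝ (fun y => fderiv ℝ u y (EuclideanSpace.single i 1)) x
    (EuclideanSpace.single i 1)

/-- The biharmonic operator `Δ²`. -/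
noncomputable def biharm {N : ℕ} (u : EuclideanSpace ℝ (Fin N) → ℝ)
    (x : EuclideanSpace ℝ (Fin N)) : ℝ :=
  lap (lap u) x

/-- A classical solution of `(P)_λ` on the unit ball `B ⊆ ℝ^N`:
`u ∈ C⁴(B̄)`, `0 < u < 1` in `B`, `Δ²u = λ (1-u)⁻²` in `B`, and `u = 0`, `∂_ν u = 0` on `∂B`. -/
structure IsClassicalSolution (N : ℕ) (lam : ℝ) (u : EuclideanSpace ℝ (Fin N) → ℝ) : Prop where
  contDiffOn : ContDiffOn ℝ 4 u (closedBall (0 : EuclideanSpace ℝ (Fin N)) 1)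
  pos : ∀ x ∈ ball (0 : EuclideanSpace ℝ (Fin N)) 1, 0 < u x
  lt_one : ∀ x ∈ ball (0 : EuclideanSpace ℝ (Fin N)) 1, u x < 1
  eqn : ∀ x ∈ ball (0 : EuclideanSpace ℝ (Fin N)) 1, biharm u x = lam / (1 - u x) ^ 2
  bdry : ∀ x : EuclideanSpace ℝ (Fin N), ‖x‖ = 1 → u x = 0
  bdry_deriv : ∀ x : EuclideanSpace ℝ (Fin N), ‖x‖ = 1 →
    fderivWithin ℝ u (closedBall (0 : EuclideanSpace ℝ (Fin N)) 1) x x = 0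

/-- The set of voltages `λ > 0` for which `(P)_λ` admits a classical solution;
the pull-in voltage `λ*` is its supremum. -/
def solSet (N : ℕ) : Set ℝ := {lam | 0 < lam ∧ ∃ u, IsClassicalSolution N lam u}

/-- `λ̄_N = (8/9)(N - 2/3)(N - 8/3)`. -/
noncomputable def lamBar (N : ℕ) : ℝ := (8 / 9) * ((N : ℝ) - 2 / 3) * ((N : ℝ) - 8 / 3)

noncomputable def Tk (k : ℕ) (f : ℝ → ℝ) (s : ℝ) : ℝ := ∫ r in (0:ℝ)..1, r ^ k * f (r ^ 2 * s)

noncomputable def Sop (n : ℕ) (f : ℝ → ℝ) (s : ℝ) : ℝ := (1 / 2) * Tk n f s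

noncomputable def Aop (n : ℕ) (f : ℝ → ℝ) (s : ℝ) : ℝ := ∫ t in (0:ℝ)..s, Sop n f t

noncomputable def Vop (n : ℕ) (f : ℝ → ℝ) (s : ℝ) : ℝ :=
  Aop n f s - 2 * ((n : ℝ) + 1) * Sop n (Aop n f) 1

noncomputable def Gop (n : ℕ) (f : ℝ → ℝ) (s : ℝ) : ℝ := ∫ t in (1:ℝ)..s, Sop n (Vop n f) t

lemma Tk_cont (k : ℕ) {f : ℝ → ℝ} (hf : Continuous f) : Continuous (Tk k f) := by
  unfold Tk
  apply intervalIntegral.continuous_parametric_intervalIntegral_of_continuous'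
  fun_prop

lemma Sop_cont (k : ℕ) {f : ℝ → ℝ} (hf : Continuous f) : Continuous (Sop k f) :=
  continuous_const.mul (Tk_cont k hf)

lemma Aop_hasDeriv (n : ℕ) {f : ℝ → ℝ} (hf : Continuous f) (s : ℝ) :
    HasDerivAt (Aop n f) (Sop n f s) s :=
  ((Sop_cont n hf).integral_hasStrictDerivAt 0 s).hasDerivAt

lemma Aop_cont (n : ℕ) {f : ℝ → ℝ} (hf : Continuous f) : Continuous (Aop n f) :=
  continuous_iff_continuousAt.2 fun s => (Aop_hasDeriv n hf s).continuousAt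

lemma Vop_hasDeriv (n : ℕ) {f : ℝ → ℝ} (hf : Continuous f) (s : ℝ) :
    HasDerivAt (Vop n f) (Sop n f s) s :=
  (Aop_hasDeriv n hf s).sub_const _

lemma Vop_cont (n : ℕ) {f : ℝ → ℝ} (hf : Continuous f) : Continuous (Vop n f) :=
  continuous_iff_continuousAt.2 fun s => (Vop_hasDeriv n hf s).continuousAt

lemma Gop_hasDeriv (n : ℕ) {f : ℝ → ℝ} (hf : Continuous f) (s : ℝ) :
    HasDerivAt (Gop n f) (Sop n (Vop n f) s) s :=
  ((Sop_cont n (Vop_cont n hf)).integral_hasStrictDerivAt 1 s).hasDerivAt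

lemma Gop_cont (n : ℕ) {f : ℝ → ℝ} (hf : Continuous f) : Continuous (Gop n f) :=
  continuous_iff_continuousAt.2 fun s => (Gop_hasDeriv n hf s).continuousAt

lemma Tk_hasDeriv (k : ℕ) {f : ℝ → ℝ} (hf : ContDiff ℝ 1 f) (s : ℝ) :
    HasDerivAt (Tk k f) (Tk (k + 2) (deriv f) s) s := by
  have hfc : Continuous f := hf.continuous
  have hdc : Continuous (deriv f) := hf.continuous_deriv le_rfl
  have hd : ∀ x, HasDerivAt f (deriv f x) x := fun x =>
    (hf.differentiable (by norm_num) x).hasDerivAt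
  have hb : Continuous fun p : ℝ × ℝ => p.1 ^ (k + 2) * deriv f (p.1 ^ 2 * p.2) := by fun_prop
  obtain ⟨C, hC⟩ := ((isCompact_Icc (a := (0:ℝ)) (b := 1)).prod
    (isCompact_Icc (a := s - 1) (b := s + 1))).exists_bound_of_continuousOn hb.continuousOn
  have := intervalIntegral.hasDerivAt_integral_of_dominated_loc_of_deriv_le
    (μ := volume) (𝕜 := ℝ) (a := 0) (b := 1) (x₀ := s) (s := Icc (s - 1) (s + 1))
    (F := fun x r => r ^ k * f (r ^ 2 * x))
    (F' := fun x r => r ^ (k + 2) * deriv f (r ^ 2 * x)) (bound := fun _ => C)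
    (Icc_mem_nhds (by linarith) (by linarith))
    (Eventually.of_forall fun x => by
      apply Continuous.aestronglyMeasurable; fun_prop)
    (by apply Continuous.intervalIntegrable; fun_prop)
    (by apply Continuous.aestronglyMeasurable; fun_prop)
    (Eventually.of_forall fun r hr x hx => by
      rw [uIoc_of_le zero_le_one] at hr
      exact hC (r, x) ⟨⟨hr.1.le, hr.2⟩, hx⟩)
    (by simp)
    (Eventually.of_forall fun r hr x hx => by
      have h1 : HasDerivAt (fun x : ℝ => r ^ 2 * x) (r ^ 2) x := by
        simpa using (hasDerivAt_id x).const_mul (r ^ 2)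
      have h2 := ((hd (r ^ 2 * x)).comp x h1).const_mul (r ^ k)
      exact h2.congr_deriv (by ring))
  exact this.2

lemma Tk_contDiff (m : ℕ) : ∀ (k : ℕ) {f : ℝ → ℝ}, ContDiff ℝ m f → ContDiff ℝ m (Tk k f) := by
  induction m with
  | zero => 
    intro k f hf
    exact contDiff_zero.2 (Tk_cont k hf.continuous)
  | succ m ih =>
    intro k f hf
    have h1 : ContDiff ℝ 1 f := hf.of_le (by norm_cast; omega)
    have hd : deriv (Tk k f) = Tk (k + 2) (deriv f) := funext fun s => (Tk_hasDeriv k h1 s).deriv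
    push_cast at hf ⊢
    rw [contDiff_succ_iff_deriv] at hf ⊢
    refine ⟨fun s => (Tk_hasDeriv k h1 s).differentiableAt, by simp, ?_⟩
    rw [hd]
    exact ih _ hf.2.2

lemma Sop_contDiff (m k : ℕ) {f : ℝ → ℝ} (hf : ContDiff ℝ m f) : ContDiff ℝ m (Sop k f) :=
  contDiff_const.mul (Tk_contDiff m k hf)

lemma contDiff_of_hasDeriv (m : ℕ) {F f : ℝ → ℝ} (h : ∀ s, HasDerivAt F (f s) s)
    (hf : ContDiff ℝ m f) : ContDiff ℝ (m + 1 : ℕ) F := by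
  push_cast
  rw [contDiff_succ_iff_deriv]
  refine ⟨fun s => (h s).differentiableAt, by simp, ?_⟩
  rwa [show deriv F = f from funext fun s => (h s).deriv]

lemma Vop_contDiff (m n : ℕ) {f : ℝ → ℝ} (hf : ContDiff ℝ m f) :
    ContDiff ℝ (m + 1 : ℕ) (Vop n f) :=
  contDiff_of_hasDeriv m (Vop_hasDeriv n hf.continuous) (Sop_contDiff m n hf)

lemma Gop_contDiff (m n : ℕ) {f : ℝ → ℝ} (hf : ContDiff ℝ m f) :
    ContDiff ℝ (m + 2 : ℕ) (Gop n f) :=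
  contDiff_of_hasDeriv (m + 1) (Gop_hasDeriv n hf.continuous)
    (Sop_contDiff _ n (Vop_contDiff m n hf))

/-- `4 s (T f)' + 2 N T f = f`. -/
lemma Sop_ode (n : ℕ) {f : ℝ → ℝ} (hf : ContDiff ℝ 1 f) (s : ℝ) :
    4 * s * ((1 / 2) * Tk (n + 2) (deriv f) s) + 2 * ((n : ℝ) + 1) * Sop n f s = f s := by
  have hfc : Continuous f := hf.continuous
  have hdc : Continuous (deriv f) := hf.continuous_deriv le_rfl
  have hd : ∀ x, HasDerivAt f (deriv f x) x := fun x =>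
    (hf.differentiable (by norm_num) x).hasDerivAt
  have key : ∀ r : ℝ, HasDerivAt (fun r : ℝ => r ^ (n + 1) * f (r ^ 2 * s))
      (2 * s * (r ^ (n + 2) * deriv f (r ^ 2 * s)) + ((n : ℝ) + 1) * (r ^ n * f (r ^ 2 * s))) r := by
    intro r
    have h1 : HasDerivAt (fun r : ℝ => r ^ 2 * s) (2 * r * s) r := by
      simpa using (hasDerivAt_pow 2 r).mul_const s
    have h2 := (hasDerivAt_pow (n + 1) r).mul ((hd (r ^ 2 * s)).comp r h1)
    refine h2.congr_deriv ?_
    push_cast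
    simp
    ring
  have := intervalIntegral.integral_eq_sub_of_hasDerivAt (a := 0) (b := 1) (fun r _ => key r)
    (by apply Continuous.intervalIntegrable; fun_prop)
  rw [intervalIntegral.integral_add (by apply Continuous.intervalIntegrable; fun_prop)
    (by apply Continuous.intervalIntegrable; fun_prop), intervalIntegral.integral_const_mul,
    intervalIntegral.integral_const_mul] at this
  simp at this
  unfold Sop Tk
  linarith

lemma Tk_lin (k : ℕ) {f g : ℝ → ℝ} (hf : Continuous f) (hg : Continuous g) (a s : ℝ) :
    Tk k (fun x => f x + a * g x) s = Tk k f s + a * Tk k g s := by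
  unfold Tk
  rw [← intervalIntegral.integral_const_mul, ← intervalIntegral.integral_add
    (by apply Continuous.intervalIntegrable; fun_prop)
    (by apply Continuous.intervalIntegrable; fun_prop)]
  congr 1; ext r; ring

lemma Sop_lin (k : ℕ) {f g : ℝ → ℝ} (hf : Continuous f) (hg : Continuous g) (a s : ℝ) :
    Sop k (fun x => f x + a * g x) s = Sop k f s + a * Sop k g s := by
  unfold Sop; rw [Tk_lin k hf hg]; ring

lemma Aop_lin (k : ℕ) {f g : ℝ → ℝ} (hf : Continuous f) (hg : Continuous g) (a s : ℝ) :
    Aop k (fun x => f x + a * g x) s = Aop k f s + a * Aop k g s := by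
  have h1 := Sop_cont k hf
  have h2 := Sop_cont k hg
  unfold Aop
  rw [← intervalIntegral.integral_const_mul, ← intervalIntegral.integral_add
    (by apply Continuous.intervalIntegrable; fun_prop)
    (by apply Continuous.intervalIntegrable; fun_prop)]
  congr 1; ext r; rw [Sop_lin k hf hg]

lemma Vop_lin (k : ℕ) {f g : ℝ → ℝ} (hf : Continuous f) (hg : Continuous g) (a s : ℝ) :
    Vop k (fun x => f x + a * g x) s = Vop k f s + a * Vop k g s := by
  unfold Vop
  rw [show Aop k (fun x => f x + a * g x) = fun x => Aop k f x + a * Aop k g x from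
    funext (Aop_lin k hf hg a), Sop_lin k (Aop_cont k hf) (Aop_cont k hg)]
  ring

lemma Gop_lin (k : ℕ) {f g : ℝ → ℝ} (hf : Continuous f) (hg : Continuous g) (a s : ℝ) :
    Gop k (fun x => f x + a * g x) s = Gop k f s + a * Gop k g s := by
  have h1 := Sop_cont k (Vop_cont k hf)
  have h2 := Sop_cont k (Vop_cont k hg)
  unfold Gop
  rw [show Vop k (fun x => f x + a * g x) = fun x => Vop k f x + a * Vop k g x from
    funext (Vop_lin k hf hg a),
    ← intervalIntegral.integral_const_mul, ← intervalIntegral.integral_add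
    (by apply Continuous.intervalIntegrable; fun_prop)
    (by apply Continuous.intervalIntegrable; fun_prop)]
  congr 1; ext r; rw [Sop_lin k (Vop_cont k hf) (Vop_cont k hg)]

lemma Sop_one (n : ℕ) (c s : ℝ) : Sop n (fun _ => c) s = c / (2 * ((n : ℝ) + 1)) := by
  unfold Sop Tk
  rw [intervalIntegral.integral_mul_const, integral_pow]
  simp; field_simp

lemma Sop_id (n : ℕ) (a b s : ℝ) : Sop n (fun x => b + a * x) s =
    b / (2 * ((n : ℝ) + 1)) + a * (s / (2 * ((n : ℝ) + 3))) := by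
  rw [Sop_lin n (f := fun _ => b) (g := fun x => x) (by fun_prop) (by fun_prop), Sop_one]
  congr 2
  unfold Sop Tk
  simp_rw [← mul_assoc, ← pow_add]
  rw [intervalIntegral.integral_mul_const, integral_pow]
  simp; field_simp; ring

lemma Gop_one (n : ℕ) (s : ℝ) :
    Gop n (fun _ => 1) s = (1 - s) ^ 2 / (8 * ((n : ℝ) + 1) * ((n : ℝ) + 3)) := by
  have hA : Aop n (fun _ => 1) = fun x => 0 + (1 / (2 * ((n : ℝ) + 1))) * x := by
    ext x; unfold Aop; simp_rw [Sop_one]; simp; ring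
  have hV : Vop n (fun _ => 1) = fun x => (-1 / (2 * ((n : ℝ) + 3))) + (1 / (2 * ((n : ℝ) + 1))) * x := by
    ext x; unfold Vop; rw [hA, Sop_id]; field_simp; ring
  have hT : ∀ x, Sop n (Vop n (fun _ => 1)) x = (1 / (4 * ((n : ℝ) + 1) * ((n : ℝ) + 3))) * (x - 1) := by
    intro x; rw [hV, Sop_id]; field_simp; ring
  unfold Gop
  simp_rw [hT]
  rw [intervalIntegral.integral_const_mul, intervalIntegral.integral_sub (by simp) (by simp)]
  simp
  field_simp; ring

lemma Sop_V_one (n : ℕ) {f : ℝ → ℝ} (hf : Continuous f) : Sop n (Vop n f) 1 = 0 := by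
  have : Vop n f = fun x => Aop n f x + (-1) * (fun _ => 2 * ((n : ℝ) + 1) * Sop n (Aop n f) 1) x := by
    ext x; simp only [Vop]; ring
  rw [this, Sop_lin n (Aop_cont n hf) (by fun_prop), Sop_one]
  field_simp; ring

lemma Sop_mono_fun (n : ℕ) {f g : ℝ → ℝ} (hf : Continuous f) (hg : Continuous g) {s t : ℝ}
    (h : ∀ r ∈ Icc (0:ℝ) 1, f (r ^ 2 * s) ≤ g (r ^ 2 * t)) : Sop n f s ≤ Sop n g t := by
  unfold Sop Tk
  apply mul_le_mul_of_nonneg_left _ (by norm_num)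
  apply intervalIntegral.integral_mono_on zero_le_one
    (by apply Continuous.intervalIntegrable; fun_prop)
    (by apply Continuous.intervalIntegrable; fun_prop)
  intro r hr
  exact mul_le_mul_of_nonneg_left (h r hr) (pow_nonneg hr.1 _)

lemma Gop_nonneg (n : ℕ) {f : ℝ → ℝ} (hf : Continuous f) (h0 : ∀ s ∈ Icc (0:ℝ) 1, 0 ≤ f s)
    {s : ℝ} (hs : s ∈ Icc (0:ℝ) 1) : 0 ≤ Gop n f s := by
  have hsq : ∀ r ∈ Icc (0:ℝ) 1, r ^ 2 ∈ Icc (0:ℝ) 1 := fun r hr =>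
    ⟨by positivity, pow_le_one₀ hr.1 hr.2⟩
  have hT : ∀ t ∈ Icc (0:ℝ) 1, 0 ≤ Sop n f t := by
    intro t ht
    have := Sop_mono_fun n (f := fun _ => 0) (g := f) continuous_const hf (s := t) (t := t)
      (fun r hr => h0 _ ⟨mul_nonneg (hsq r hr).1 ht.1, mul_le_one₀ (hsq r hr).2 ht.1 ht.2⟩)
    rwa [Sop_one, zero_div] at this
  have hV : MonotoneOn (Vop n f) (Icc 0 1) := by
    apply monotoneOn_of_deriv_nonneg (convex_Icc 0 1) (Vop_cont n hf).continuousOn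
      (fun x _ => (Vop_hasDeriv n hf x).differentiableAt.differentiableWithinAt)
    intro x hx
    rw [(Vop_hasDeriv n hf x).deriv]
    exact hT x (interior_subset hx)
  have hTV : ∀ t ∈ Icc (0:ℝ) 1, Sop n (Vop n f) t ≤ 0 := by
    intro t ht
    rw [← Sop_V_one n hf]
    apply Sop_mono_fun n (Vop_cont n hf) (Vop_cont n hf)
    intro r hr
    have := hsq r hr
    apply hV ⟨mul_nonneg this.1 ht.1, mul_le_one₀ this.2 ht.1 ht.2⟩ (by simpa using this)
    exact mul_le_mul_of_nonneg_left ht.2 this.1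
  unfold Gop
  rw [intervalIntegral.integral_symm, ← intervalIntegral.integral_neg]
  apply intervalIntegral.integral_nonneg hs.2
  intro t ht
  have := hTV t ⟨hs.1.trans ht.1, ht.2⟩
  linarith

lemma Gop_le (n : ℕ) {f g : ℝ → ℝ} (hf : Continuous f) (hg : Continuous g) (c : ℝ)
    (h : ∀ s ∈ Icc (0:ℝ) 1, f s ≤ g s + c) {s : ℝ} (hs : s ∈ Icc (0:ℝ) 1) :
    Gop n f s ≤ Gop n g s + c * ((1 - s) ^ 2 / (8 * ((n : ℝ) + 1) * ((n : ℝ) + 3))) := by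
  have h1 := Gop_nonneg n (f := fun x => (fun x => g x + c * (fun _ => 1) x) x + (-1) * f x)
    (by fun_prop) (fun s hs => by have := h s hs; simp; linarith) hs
  rw [Gop_lin n (by fun_prop) hf, Gop_lin n hg (by fun_prop), Gop_one] at h1
  linarith

lemma Gop_congr (n : ℕ) {f g : ℝ → ℝ} (hf : Continuous f) (hg : Continuous g)
    (h : ∀ s ∈ Icc (0:ℝ) 1, f s = g s) {s : ℝ} (hs : s ∈ Icc (0:ℝ) 1) :
    Gop n f s = Gop n g s := by
  have h1 := Gop_le n hf hg 0 (fun s hs => by rw [h s hs]; simp) hs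
  have h2 := Gop_le n hg hf 0 (fun s hs => by rw [h s hs]; simp) hs
  linarith

lemma Gop_const (n : ℕ) (c s : ℝ) :
    Gop n (fun _ => c) s = c * ((1 - s) ^ 2 / (8 * ((n : ℝ) + 1) * ((n : ℝ) + 3))) := by
  have h0 : Gop n (fun _ => 0) s = 0 := by
    have := Gop_lin n (f := fun _ => 0) (g := fun _ => 0) continuous_const continuous_const 1 s
    simp at this; exact this
  have := Gop_lin n (f := fun _ => 0) (g := fun _ => 1) continuous_const continuous_const c s
  simp only [mul_one, zero_add] at this
  rw [this, h0, Gop_one]; ring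

/-! ### Laplacian of radial functions -/

lemma hasFDerivAt_radial {N : ℕ} {U : ℝ → ℝ} {p : ℝ} (y : EuclideanSpace ℝ (Fin N))
    (h : HasDerivAt U p (‖y‖ ^ 2)) :
    HasFDerivAt (fun x : EuclideanSpace ℝ (Fin N) => U (‖x‖ ^ 2)) (p • (2 • innerSL ℝ y)) y := 
  h.comp_hasFDerivAt y (hasStrictFDerivAt_norm_sq y).hasFDerivAt

lemma lap_radial {N : ℕ} {U P Q : ℝ → ℝ} (hU : ∀ s, HasDerivAt U (P s) s)
    (hP : ∀ s, HasDerivAt P (Q s) s) (x : EuclideanSpace ℝ (Fin N)) :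
    lap (fun x : EuclideanSpace ℝ (Fin N) => U (‖x‖ ^ 2)) x =
      4 * ‖x‖ ^ 2 * Q (‖x‖ ^ 2) + 2 * (N : ℝ) * P (‖x‖ ^ 2) := by
  have h1 : ∀ i : Fin N, (fun y : EuclideanSpace ℝ (Fin N) => 
      fderiv ℝ (fun x : EuclideanSpace ℝ (Fin N) => U (‖x‖ ^ 2)) y (EuclideanSpace.single i 1)) =
      fun y => P (‖y‖ ^ 2) * (2 * y i) := by
    intro i; ext y
    rw [(hasFDerivAt_radial y (hU _)).fderiv]
    simp [EuclideanSpace.inner_single_right]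
  have h2 : ∀ i : Fin N, fderiv ℝ (fun y : EuclideanSpace ℝ (Fin N) => P (‖y‖ ^ 2) * (2 * y i)) x
      (EuclideanSpace.single i 1) = 4 * Q (‖x‖ ^ 2) * (x i) ^ 2 + 2 * P (‖x‖ ^ 2) := by
    intro i
    have h3 : HasFDerivAt (fun y : EuclideanSpace ℝ (Fin N) => 2 * y i)
        ((2:ℝ) • (EuclideanSpace.proj i : EuclideanSpace ℝ (Fin N) →L[ℝ] ℝ)) x :=
      ((EuclideanSpace.proj i : EuclideanSpace ℝ (Fin N) →L[ℝ] ℝ).hasFDerivAt).const_mul 2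
    have h4 := (hasFDerivAt_radial x (hP _)).mul h3
    have h5 := h4.fderiv
    rw [show (fun y : EuclideanSpace ℝ (Fin N) => P (‖y‖ ^ 2) * (2 * y i)) =
      (fun x : EuclideanSpace ℝ (Fin N) => P (‖x‖ ^ 2)) * fun y => 2 * y i from rfl, h5]
    simp [EuclideanSpace.inner_single_right]
    ring
  unfold lap
  simp_rw [h1, h2, Finset.sum_add_distrib, ← Finset.mul_sum]
  rw [EuclideanSpace.real_norm_sq_eq]
  simp
  ring

/-- Solving the linear equation. -/
lemma biharm_Gop (n : ℕ) {f : ℝ → ℝ} (hf : ContDiff ℝ 1 f) (x : EuclideanSpace ℝ (Fin (n + 1))) :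
    biharm (fun x : EuclideanSpace ℝ (Fin (n + 1)) => Gop n f (‖x‖ ^ 2)) x = f (‖x‖ ^ 2) := by
  have hV : ContDiff ℝ 1 (Vop n f) := (Vop_contDiff 1 n (by exact_mod_cast hf)).of_le (by norm_num)
  have hl : lap (fun x : EuclideanSpace ℝ (Fin (n + 1)) => Gop n f (‖x‖ ^ 2)) =
      fun x => Vop n f (‖x‖ ^ 2) := by
    ext y
    rw [lap_radial (Gop_hasDeriv n hf.continuous)
      (fun s => (Tk_hasDeriv n hV s).const_mul (1 / 2)), ← Sop_ode n hV]
    push_cast; rfl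
  unfold biharm
  rw [hl, lap_radial (Vop_hasDeriv n hf.continuous)
      (fun s => (Tk_hasDeriv n hf s).const_mul (1 / 2)), ← Sop_ode n hf]
  push_cast; rfl

/-! ### The nonlinear fixed point -/

noncomputable def clampT (u : ℝ) : ℝ := min (max u 0) (1 / 3)

lemma clampT_lip (u v : ℝ) : |clampT u - clampT v| ≤ |u - v| := by
  unfold clampT
  have h1 := abs_min_sub_min_le_max (max u 0) (1 / 3) (max v 0) (1 / 3)
  have h2 := abs_max_sub_max_le_abs u v 0
  rw [sub_self, abs_zero, max_eq_left (abs_nonneg (max u 0 - max v 0))] at h1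
  exact h1.trans h2

lemma clampT_mem (u : ℝ) : 0 ≤ clampT u ∧ clampT u ≤ 1 / 3 := by
  unfold clampT
  exact ⟨le_min (le_max_right _ _) (by norm_num), min_le_right _ _⟩

noncomputable def hT (lam u : ℝ) : ℝ := lam / (1 - clampT u) ^ 2

lemma hT_cont (lam : ℝ) : Continuous (hT lam) := by
  unfold hT
  apply Continuous.div (by fun_prop) (by unfold clampT; fun_prop)
  intro u
  have := clampT_mem u
  apply pow_ne_zero
  linarith

lemma hT_bounds {lam : ℝ} (h : 0 < lam) (u : ℝ) : lam ≤ hT lam u ∧ hT lam u ≤ 9 / 4 * lam := by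
  have := clampT_mem u
  unfold hT
  have hp : 0 < (1 - clampT u) ^ 2 := by apply pow_pos; linarith
  rw [le_div_iff₀ hp, div_le_iff₀ hp]
  constructor
  · have : (1 - clampT u) ^ 2 ≤ 1 := by nlinarith
    nlinarith
  · have : 4 / 9 ≤ (1 - clampT u) ^ 2 := by nlinarith
    nlinarith

lemma hT_lip {lam : ℝ} (h : 0 < lam) (u v : ℝ) : |hT lam u - hT lam v| ≤ 27 / 4 * lam * |u - v| := by
  refine le_trans ?_ (mul_le_mul_of_nonneg_left (clampT_lip u v) (by positivity))
  unfold hT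
  obtain ⟨a0, a1⟩ := clampT_mem u
  obtain ⟨b0, b1⟩ := clampT_mem v
  generalize clampT u = a at *
  generalize clampT v = b at *
  have ha : 2 / 3 ≤ 1 - a := by linarith
  have hb : 2 / 3 ≤ 1 - b := by linarith
  have hia : (1 - a)⁻¹ ≤ 3 / 2 := by
    rw [inv_le_comm₀ (by linarith) (by norm_num)]; linarith
  have hib : (1 - b)⁻¹ ≤ 3 / 2 := by
    rw [inv_le_comm₀ (by linarith) (by norm_num)]; linarith
  have hia0 : 0 ≤ (1 - a)⁻¹ := inv_nonneg.2 (by linarith)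
  have hib0 : 0 ≤ (1 - b)⁻¹ := inv_nonneg.2 (by linarith)
  have e : lam / (1 - a) ^ 2 - lam / (1 - b) ^ 2 =
      lam * ((1 - a)⁻¹ * (1 - b)⁻¹ * ((1 - a)⁻¹ + (1 - b)⁻¹)) * (a - b) := by
    have : 1 - a ≠ 0 := by linarith
    have : 1 - b ≠ 0 := by linarith
    field_simp; ring
  rw [e, abs_mul]
  apply mul_le_mul_of_nonneg_right _ (abs_nonneg _)
  rw [abs_of_nonneg (by positivity)]
  have h1 : (1 - a)⁻¹ * (1 - b)⁻¹ ≤ 9 / 4 := by nlinarith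
  have h2 : (1 - a)⁻¹ * (1 - b)⁻¹ * ((1 - a)⁻¹ + (1 - b)⁻¹) ≤ 9 / 4 * 3 :=
    mul_le_mul h1 (by linarith) (by positivity) (by norm_num)
  nlinarith

/-- There is a continuous fixed point. -/
lemma exists_fixed (n : ℕ) {lam : ℝ} (h0 : 0 < lam) (hl : lam ≤ ((n : ℝ) + 1) * ((n : ℝ) + 3)) :
    ∃ f : ℝ → ℝ, Continuous f ∧ (∀ s, lam ≤ f s ∧ f s ≤ 9 / 4 * lam) ∧
      ∀ s ∈ Icc (0:ℝ) 1, f s = hT lam (Gop n f s) := by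
  let E : C(Icc (0:ℝ) 1, ℝ) → ℝ → ℝ := fun u s => hT lam (IccExtend zero_le_one u s)
  have hE : ∀ u, Continuous (E u) := fun u =>
    (hT_cont lam).comp (u.continuous.Icc_extend' (h := zero_le_one))
  let Φ : C(Icc (0:ℝ) 1, ℝ) → C(Icc (0:ℝ) 1, ℝ) := fun u =>
    ⟨fun s => Gop n (E u) s, (Gop_cont n (hE u)).comp continuous_subtype_val⟩
  have key : ∀ u v : C(Icc (0:ℝ) 1, ℝ), ∀ s : Icc (0:ℝ) 1,
      Gop n (E u) s ≤ Gop n (E v) s + 27 / 32 * dist u v := by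
    intro u v s
    have h1 := Gop_le n (hE u) (hE v) (27 / 4 * lam * dist u v) (fun t ht => by
      have h2 := hT_lip h0 (IccExtend zero_le_one u t) (IccExtend zero_le_one v t)
      have h3 : |IccExtend zero_le_one u t - IccExtend zero_le_one v t| ≤ dist u v := by
        exact ContinuousMap.dist_apply_le_dist (f := u) (g := v) (projIcc 0 1 zero_le_one t)
      have h4 := (abs_le.1 h2).2
      have h5 : 27 / 4 * lam * |IccExtend zero_le_one u t - IccExtend zero_le_one v t|
        ≤ 27 / 4 * lam * dist u v := mul_le_mul_of_nonneg_left h3 (by positivity)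
      simp only [E]
      linarith) s.2
    refine h1.trans ?_
    have hs := s.2
    have h6 : (1 - (s:ℝ)) ^ 2 ≤ 1 := by nlinarith [hs.1, hs.2]
    have h7 : 27 / 4 * lam * ((1 - (s:ℝ)) ^ 2 / (8 * ((n : ℝ) + 1) * ((n : ℝ) + 3))) ≤ 27 / 32 := by
      rw [← mul_div_assoc, div_le_iff₀ (by positivity)]
      have : lam * (1 - (s:ℝ)) ^ 2 ≤ ((n : ℝ) + 1) * ((n : ℝ) + 3) := by
        nlinarith [mul_le_mul_of_nonneg_left h6 h0.le]
      linarith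
    have := mul_le_mul_of_nonneg_right h7 (dist_nonneg (x := u) (y := v))
    nlinarith
  have hC : ContractingWith (27 / 32) Φ := by
    refine ⟨by rw [div_lt_one] <;> norm_num, LipschitzWith.of_dist_le_mul fun u v => ?_⟩
    rw [ContinuousMap.dist_le (by positivity)]
    intro s
    have h1 := key u v s
    have h2 := key v u s
    rw [dist_comm] at h2
    rw [Real.dist_eq, abs_le]
    simp only [Φ, ContinuousMap.coe_mk]
    push_cast
    constructor <;> linarith
  have hfix := hC.fixedPoint_isFixedPt
  set u := ContractingWith.fixedPoint Φ hC
  refine ⟨E u, hE u, fun s => hT_bounds h0 _, fun s hs => ?_⟩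
  have : Gop n (E u) s = u ⟨s, hs⟩ := DFunLike.congr_fun hfix ⟨s, hs⟩
  rw [this]
  simp only [E]
  rw [IccExtend_of_mem _ _ hs]

noncomputable def dS (u : ℝ) : ℝ :=
  Real.smoothTransition (2 - 3 * u) * (1 - u) + (1 - Real.smoothTransition (2 - 3 * u))

lemma dS_pos (u : ℝ) : 0 < dS u := by
  unfold dS
  have h1 := Real.smoothTransition.le_one (2 - 3 * u)
  have h0 := Real.smoothTransition.nonneg (2 - 3 * u)
  rcases le_or_gt (2 - 3 * u) 0 with h | h
  · rw [Real.smoothTransition.zero_of_nonpos h]; norm_num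
  · nlinarith

lemma dS_eq {u : ℝ} (hu : u ≤ 1 / 3) : dS u = 1 - u := by
  unfold dS
  rw [Real.smoothTransition.one_of_one_le (by linarith)]; ring

lemma dS_contDiff : ContDiff ℝ 2 dS := by
  unfold dS
  have : ContDiff ℝ 2 fun u : ℝ => Real.smoothTransition (2 - 3 * u) :=
    (Real.smoothTransition.contDiff (n := 2)).comp (by fun_prop)
  fun_prop

lemma exists_sol (n : ℕ) {lam : ℝ} (h0 : 0 < lam) (hl : lam ≤ ((n : ℝ) + 1) * ((n : ℝ) + 3)) :
    ∃ u, IsClassicalSolution (n + 1) lam u := by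
  obtain ⟨f, hf, hfb, hfix⟩ := exists_fixed n h0 hl
  have hlow : ∀ s ∈ Icc (0:ℝ) 1,
      lam * ((1 - s) ^ 2 / (8 * ((n : ℝ) + 1) * ((n : ℝ) + 3))) ≤ Gop n f s := by
    intro s hs
    have := Gop_le n (f := fun _ => lam) continuous_const hf 0 (fun s _ => by have := (hfb s).1; linarith) hs
    rw [Gop_const] at this; linarith
  have hup : ∀ s ∈ Icc (0:ℝ) 1, Gop n f s ≤ 1 / 3 := by
    intro s hs
    have := Gop_le n hf (g := fun _ => 9 / 4 * lam) continuous_const 0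
      (fun s _ => by have := (hfb s).2; linarith) hs
    rw [Gop_const] at this
    refine this.trans ?_
    have h6 : (1 - (s:ℝ)) ^ 2 ≤ 1 := by nlinarith [hs.1, hs.2]
    have : lam * (1 - (s:ℝ)) ^ 2 ≤ ((n : ℝ) + 1) * ((n : ℝ) + 3) := by
      nlinarith [mul_le_mul_of_nonneg_left h6 h0.le]
    rw [← mul_div_assoc, zero_mul, add_zero, div_le_iff₀ (by positivity)]
    nlinarith
  have hlow0 : ∀ s ∈ Icc (0:ℝ) 1, 0 ≤ Gop n f s := fun s hs =>
    le_trans (by positivity) (hlow s hs)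
  let g : ℝ → ℝ := fun s => lam / (dS (Gop n f s)) ^ 2
  have hG0 : ContDiff ℝ 2 (Gop n f) := by
    exact_mod_cast Gop_contDiff 0 n (contDiff_zero.2 hf)
  have hg : ContDiff ℝ 2 g := by
    apply ContDiff.div contDiff_const ((dS_contDiff.comp hG0).pow 2)
    intro s
    exact pow_ne_zero _ (dS_pos _).ne'
  have hfg : ∀ s ∈ Icc (0:ℝ) 1, f s = g s := by
    intro s hs
    have h3 := hup s hs
    have h4 := hlow0 s hs
    rw [hfix s hs]
    simp only [g, hT, clampT]
    rw [dS_eq h3, max_eq_left h4, min_eq_left h3]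
  have hGG : ∀ s ∈ Icc (0:ℝ) 1, Gop n f s = Gop n g s := fun s hs =>
    Gop_congr n hf hg.continuous hfg hs
  have hG1 : ContDiff ℝ 4 (Gop n g) := by
    exact_mod_cast Gop_contDiff 2 n hg
  have hmem : ∀ x : EuclideanSpace ℝ (Fin (n + 1)), ‖x‖ ≤ 1 → ‖x‖ ^ 2 ∈ Icc (0:ℝ) 1 := fun x hx =>
    ⟨by positivity, pow_le_one₀ (norm_nonneg _) hx⟩
  have hu : ContDiff ℝ 4 (fun x : EuclideanSpace ℝ (Fin (n + 1)) => Gop n g (‖x‖ ^ 2)) :=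
    hG1.comp (contDiff_norm_sq ℝ)
  refine ⟨fun x => Gop n g (‖x‖ ^ 2), hu.contDiffOn, ?_, ?_, ?_, ?_, ?_⟩
  · intro x hx
    rw [mem_ball_zero_iff] at hx
    have hm := hmem x hx.le
    rw [← hGG _ hm]
    refine lt_of_lt_of_le ?_ (hlow _ hm)
    have : 0 < 1 - ‖x‖ ^ 2 := by nlinarith [norm_nonneg x]
    positivity
  · intro x hx
    rw [mem_ball_zero_iff] at hx
    have hm := hmem x hx.le
    rw [← hGG _ hm]
    linarith [hup _ hm]
  · intro x hx
    rw [mem_ball_zero_iff] at hx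
    have hm := hmem x hx.le
    rw [biharm_Gop n (hg.of_le (by norm_num)), ← hGG _ hm]
    simp only [g]
    rw [dS_eq (hup _ hm)]
  · intro x hx
    simp [hx, Gop]
  · intro x hx
    have hud : UniqueDiffWithinAt ℝ (closedBall (0 : EuclideanSpace ℝ (Fin (n + 1))) 1) x := by
      apply uniqueDiffOn_convex (convex_closedBall _ _)
      · rw [interior_closedBall _ one_ne_zero]; exact ⟨0, by simp⟩
      · simp [hx]
    rw [(hasFDerivAt_radial x (Gop_hasDeriv n hg.continuous _)).hasFDerivWithinAt.fderivWithin hud]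
    simp [hx, Sop_V_one n hg.continuous]

/-! ### Boundedness of the set of admissible voltages -/

lemma contDiff_pd {N : ℕ} (m : ℕ) {f : EuclideanSpace ℝ (Fin N) → ℝ} (hf : ContDiff ℝ (m + 1 : ℕ) f)
    (v : EuclideanSpace ℝ (Fin N)) : ContDiff ℝ m (fun y => fderiv ℝ f y v) :=
  (hf.fderiv_right (m := m) (by push_cast; rfl)).clm_apply contDiff_const

lemma contDiff_lap {N : ℕ} (m : ℕ) {f : EuclideanSpace ℝ (Fin N) → ℝ}
    (hf : ContDiff ℝ (m + 2 : ℕ) f) : ContDiff ℝ m (lap f) := by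
  unfold lap
  apply ContDiff.sum
  intro i _
  exact contDiff_pd m (contDiff_pd (m + 1) hf _) _

lemma pd_ibp {N : ℕ} {f g : EuclideanSpace ℝ (Fin N) → ℝ} (hf : ContDiff ℝ 1 f)
    (hg : ContDiff ℝ 1 g) (hc : HasCompactSupport f) (v : EuclideanSpace ℝ (Fin N)) :
    ∫ x, f x * fderiv ℝ g x v = - ∫ x, fderiv ℝ f x v * g x := by
  have hfd : Continuous fun y => fderiv ℝ f y v :=
    (contDiff_pd 0 (by exact_mod_cast hf) v).continuous
  have hgd : Continuous fun y => fderiv ℝ g y v :=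
    (contDiff_pd 0 (by exact_mod_cast hg) v).continuous
  apply integral_mul_fderiv_eq_neg_fderiv_mul_of_integrable
  · exact (hfd.mul hg.continuous).integrable_of_hasCompactSupport
      ((hc.fderiv_apply ℝ v).mul_right)
  · exact (hf.continuous.mul hgd).integrable_of_hasCompactSupport hc.mul_right
  · exact (hf.continuous.mul hg.continuous).integrable_of_hasCompactSupport hc.mul_right
  · exact fun x _ => hf.differentiable (by norm_num) x
  · exact fun x _ => hg.differentiable (by norm_num) x

lemma lap_ibp {N : ℕ} {f g : EuclideanSpace ℝ (Fin N) → ℝ} (hf : ContDiff ℝ 2 f)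
    (hg : ContDiff ℝ 2 g) (hc : HasCompactSupport f) :
    ∫ x, f x * lap g x = ∫ x, lap f x * g x := by
  have hf2 : ContDiff ℝ (1 + 1 : ℕ) f := by exact_mod_cast hf
  have hg2 : ContDiff ℝ (1 + 1 : ℕ) g := by exact_mod_cast hg
  have hfd : ∀ v, ContDiff ℝ 1 fun y => fderiv ℝ f y v := fun v => by
    exact_mod_cast contDiff_pd 1 hf2 v
  have hgd : ∀ v, ContDiff ℝ 1 fun y => fderiv ℝ g y v := fun v => by
    exact_mod_cast contDiff_pd 1 hg2 v
  have hfdd : ∀ v, Continuous fun x => fderiv ℝ (fun y => fderiv ℝ f y v) x v := fun v =>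
    (contDiff_pd 0 (by exact_mod_cast hfd v) v).continuous
  have hgdd : ∀ v, Continuous fun x => fderiv ℝ (fun y => fderiv ℝ g y v) x v := fun v =>
    (contDiff_pd 0 (by exact_mod_cast hgd v) v).continuous
  unfold lap
  simp_rw [Finset.mul_sum, Finset.sum_mul]
  rw [integral_finsetSum, integral_finsetSum]
  · refine Finset.sum_congr rfl fun i _ => ?_
    rw [pd_ibp (hf.of_le (by norm_num)) (hgd _) hc,
      pd_ibp (hfd _) (hg.of_le (by norm_num)) (hc.fderiv_apply ℝ _), neg_neg]
  · intro i _
    exact ((hfdd _).mul hg.continuous).integrable_of_hasCompactSupport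
      (((hc.fderiv_apply ℝ _).fderiv_apply ℝ _).mul_right)
  · intro i _
    exact (hf.continuous.mul (hgdd _)).integrable_of_hasCompactSupport hc.mul_right

lemma lap_congr {N : ℕ} {f g : EuclideanSpace ℝ (Fin N) → ℝ} {x : EuclideanSpace ℝ (Fin N)}
    (h : f =ᶠ[nhds x] g) : lap f =ᶠ[nhds x] lap g := by
  filter_upwards [h.eventuallyEq_nhds] with y hy
  unfold lap
  refine Finset.sum_congr rfl fun i _ => ?_
  have : (fun z => fderiv ℝ f z (EuclideanSpace.single i (1:ℝ))) =ᶠ[nhds y]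
      fun z => fderiv ℝ g z (EuclideanSpace.single i (1:ℝ)) := by
    filter_upwards [hy.fderiv (𝕜 := ℝ)] with z hz
    rw [hz]
  rw [this.fderiv_eq]

lemma bddAbove_solSet (N : ℕ) : BddAbove (solSet N) := by
  let φ : ContDiffBump (0 : EuclideanSpace ℝ (Fin N)) := ⟨1 / 4, 1 / 2, by norm_num, by norm_num⟩
  let χ : ContDiffBump (0 : EuclideanSpace ℝ (Fin N)) := ⟨1 / 2, 3 / 4, by norm_num, by norm_num⟩
  have hφ : ContDiff ℝ 4 φ := φ.contDiff
  have hχ : ContDiff ℝ 4 χ := χ.contDiff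
  have hφl : ContDiff ℝ 2 (lap φ) := by exact_mod_cast contDiff_lap 2 (by exact_mod_cast hφ)
  have hφb : Continuous (lap (lap φ)) := (contDiff_lap 0 (by exact_mod_cast hφl)).continuous
  obtain ⟨C, hC⟩ := (isCompact_closedBall (0 : EuclideanSpace ℝ (Fin N)) 1).exists_bound_of_continuousOn
    hφb.continuousOn
  have hI : 0 < ∫ x, φ x := φ.integral_pos
  refine ⟨(C * ∫ x, χ x) / ∫ x, φ x, ?_⟩
  rintro lam ⟨hlam, u, hu⟩
  rw [le_div_iff₀ hI]
  let w : EuclideanSpace ℝ (Fin N) → ℝ := fun x => χ x * u x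
  have hw : ContDiff ℝ 4 w := by
    rw [contDiff_iff_contDiffAt]
    intro x
    rcases lt_or_ge ‖x‖ 1 with hx | hx
    · apply hχ.contDiffAt.mul
      apply hu.contDiffOn.contDiffAt
      exact mem_of_superset (isOpen_ball.mem_nhds (mem_ball_zero_iff.2 hx)) ball_subset_closedBall
    · have : w =ᶠ[nhds x] fun _ => 0 := by
        have : {y : EuclideanSpace ℝ (Fin N) | 3 / 4 < ‖y‖} ∈ nhds x :=
          (isOpen_lt continuous_const continuous_norm).mem_nhds (by
            show (3 / 4 : ℝ) < ‖x‖
            linarith)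
        filter_upwards [this] with y hy
        have : χ y = 0 := χ.zero_of_le_dist (by rw [dist_zero_right]; exact le_of_lt hy)
        simp [w, this]
      exact contDiffAt_const.congr_of_eventuallyEq this
  have hwc : HasCompactSupport w := χ.hasCompactSupport.mul_right
  have hwl : ContDiff ℝ 2 (lap w) := by exact_mod_cast contDiff_lap 2 (by exact_mod_cast hw)
  have hwb : Continuous (lap (lap w)) := (contDiff_lap 0 (by exact_mod_cast hwl)).continuous
  have e1 : ∫ x, φ x * lap (lap w) x = ∫ x, w x * lap (lap φ) x := by
    rw [lap_ibp (hφ.of_le (by norm_num)) hwl φ.hasCompactSupport,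
      lap_ibp (hw.of_le (by norm_num)) hφl hwc]
    simp_rw [mul_comm]
  calc lam * ∫ x, φ x = ∫ x, lam * φ x := (integral_const_mul _ _).symm
    _ ≤ ∫ x, φ x * lap (lap w) x := by
      apply integral_mono
      · exact (continuous_const.mul hφ.continuous).integrable_of_hasCompactSupport
          φ.hasCompactSupport.mul_left
      · exact (hφ.continuous.mul hwb).integrable_of_hasCompactSupport
          φ.hasCompactSupport.mul_right
      intro x
      simp only
      rcases lt_or_ge ‖x‖ (1 / 2) with hx | hx
      · have hwu : w =ᶠ[nhds x] u := by
          filter_upwards [isOpen_ball.mem_nhds (mem_ball_zero_iff.2 hx)] with y hy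
          have : χ y = 1 := χ.one_of_mem_closedBall (ball_subset_closedBall hy)
          simp [w, this]
        have hxb : x ∈ ball (0 : EuclideanSpace ℝ (Fin N)) 1 := mem_ball_zero_iff.2 (by linarith)
        have h1 : lap (lap w) x = lam / (1 - u x) ^ 2 := by
          rw [(lap_congr (lap_congr hwu)).self_of_nhds]
          exact hu.eqn x hxb
        have hp := hu.pos x hxb
        have hl := hu.lt_one x hxb
        have h2 : lam ≤ lam / (1 - u x) ^ 2 := by
          have hpos : 0 < (1 - u x) ^ 2 := by apply pow_pos; linarith
          rw [le_div_iff₀ hpos]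
          have : (1 - u x) ^ 2 ≤ 1 := by nlinarith
          nlinarith
        rw [h1, mul_comm]
        exact mul_le_mul_of_nonneg_left h2 φ.nonneg
      · have : φ x = 0 := φ.zero_of_le_dist (by rw [dist_zero_right]; exact hx)
        simp [this]
    _ = ∫ x, w x * lap (lap φ) x := e1
    _ ≤ ∫ x, C * χ x := by
      apply integral_mono
      · exact (hw.continuous.mul hφb).integrable_of_hasCompactSupport hwc.mul_right
      · exact (continuous_const.mul hχ.continuous).integrable_of_hasCompactSupport
          χ.hasCompactSupport.mul_left
      intro x
      simp only [w]
      rcases lt_or_ge ‖x‖ 1 with hx | hx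
      · have hxb : x ∈ ball (0 : EuclideanSpace ℝ (Fin N)) 1 := mem_ball_zero_iff.2 hx
        have hp := hu.pos x hxb
        have hl := hu.lt_one x hxb
        have hc := hC x (ball_subset_closedBall hxb)
        rw [Real.norm_eq_abs] at hc
        have hc2 := (abs_le.1 hc).2
        have hC0 : 0 ≤ C := (abs_nonneg _).trans hc
        have h1 : u x * lap (lap φ) x ≤ C := by nlinarith
        have := mul_le_mul_of_nonneg_left h1 (χ.nonneg (x := x))
        linarith
      · have : χ x = 0 := χ.zero_of_le_dist (by
          rw [dist_zero_right]; show (3 / 4 : ℝ) ≤ ‖x‖; linarith)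
        simp [this]
    _ = C * ∫ x, χ x := integral_const_mul _ _

/-- in every dimension N ≥ 1, the pull-in voltage satisfies λ* > λ̄_N. -/
theorem pullIn_gt_lamBar (N : ℕ) (hN : 1 ≤ N) :
    lamBar N < sSup (solSet N) := by
  obtain ⟨n, rfl⟩ : ∃ n, N = n + 1 := ⟨N - 1, by omega⟩
  have h0 : (0:ℝ) < ((n : ℝ) + 1) * ((n : ℝ) + 3) := by positivity
  have hmem : ((n : ℝ) + 1) * ((n : ℝ) + 3) ∈ solSet (n + 1) := ⟨h0, exists_sol n h0 le_rfl⟩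
  refine lt_of_lt_of_le ?_ (le_csSup (bddAbove_solSet _) hmem)
  unfold lamBar
  push_cast
  have : (0:ℝ) ≤ n := Nat.cast_nonneg n
  nlinarith
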